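/- Fix α ∈ ℝ and set L(θ) := ln(cot(θ/2)) + α and D(θ) := cosθ + sin²θ · L(θ). Define, for x ∈ ℝ³ with polar angle θ ∈ (0,π) and D(θ) ≠ 0, the (−1)-homogeneous vector field u and (−2)-homogeneous function p by u = (1/r)( u_θ(θ) e_θ + u_r(θ) e_r ) and p = p̃(θ)/r², where u_θ(θ) = 4 sinθ (1 − cosθ·L(θ))/D(θ), u_r(θ) = −4 − 8(1 − cosθ·L(θ))/D(θ)², u_φ = 0, and p̃(θ) = 8(−2 + cosθ·L(θ) − sin²θ·L(θ)²)/D(θ)². Then (u,p) solves the stationary Navier–Stokes equations at every such point x. Moreover, on the component where θ is near π, lim_{x∈S², x→S} |u(x)|/ln(dist(x,S)) = −8. -/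

import Mathlib

noncomputable section

open Real Filter MeasureTheory Metric Topology
open scoped ENNReal InnerProductSpace

abbrev V3 := EuclideanSpace ℝ (Fin 3)
abbrev V2 := EuclideanSpace ℝ (Fin 2)

/-- standard basis vector in `ℝ³` -/
def e3 (j : Fin 3) : V3 := EuclideanSpace.single j 1

/-- partial derivative `∂_j f` -/
def pd (j : Fin 3) (f : V3 → ℝ) (x : V3) : ℝ := fderiv ℝ f x (e3 j)

/-- Laplacian on `ℝ³` -/
def lap3 (f : V3 → ℝ) (x : V3) : ℝ := ∑ j, pd j (fun y => pd j f y) x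

/-- stationary Navier–Stokes equations `-Δu + (u·∇)u + ∇p = 0`, `div u = 0` at `x` -/
def NSEq (u : V3 → V3) (p : V3 → ℝ) (x : V3) : Prop :=
  (∀ i, - lap3 (fun z => u z i) x + (∑ j, u x j * pd j (fun z => u z i) x) + pd i p x = 0)
  ∧ (∑ j, pd j (fun z => u z j) x) = 0

/-- stationary Euler equations `(u·∇)u + ∇p = 0`, `div u = 0` at `x` -/
def EulerEq (u : V3 → V3) (p : V3 → ℝ) (x : V3) : Prop :=
  (∀ i, (∑ j, u x j * pd j (fun z => u z i) x) + pd i p x = 0)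
  ∧ (∑ j, pd j (fun z => u z j) x) = 0

/-- south pole -/
def S3 : V3 := EuclideanSpace.single 2 (-1)
/-- north pole -/
def N3 : V3 := EuclideanSpace.single 2 1

/-- the unit sphere `S²` -/
def sphere2 : Set V3 := Metric.sphere (0 : V3) 1

/-- the open cone over a subset of the unit sphere -/
def cone3 (Ω : Set V3) : Set V3 := {x : V3 | x ≠ 0 ∧ (‖x‖⁻¹ • x) ∈ Ω}

/-- `|x'| = √(x₁² + x₂²)` -/
def rho (x : V3) : ℝ := Real.sqrt ((x 0) ^ 2 + (x 1) ^ 2)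

/-- the `x₃`-axis `{x' = 0}` -/
def axis3 : Set V3 := {x : V3 | x 0 = 0 ∧ x 1 = 0}

/-- `Ω_{a,b,R} = {a < x₃ < b, |x'| < R}` -/
def OmegaR (a b R : ℝ) : Set V3 := {x : V3 | a < x 2 ∧ x 2 < b ∧ rho x < R}

/-- build a point of `ℝ³` from `x' ∈ ℝ²` and `x₃ ∈ ℝ` -/
def emb (y : V2) (t : ℝ) : V3 := (EuclideanSpace.equiv (Fin 3) ℝ).symm ![y 0, y 1, t]

/-- spherical component `u_r = u · e_r` -/
def uRc (u : V3 → V3) (x : V3) : ℝ := (u x 0 * x 0 + u x 1 * x 1 + u x 2 * x 2) / ‖x‖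

/-- spherical component `u_θ = u · e_θ` -/
def uTc (u : V3 → V3) (x : V3) : ℝ :=
  (u x 0 * x 0 * x 2 + u x 1 * x 1 * x 2) / (‖x‖ * rho x) - u x 2 * rho x / ‖x‖

/-- spherical component `u_φ = u · e_φ` -/
def uPc (u : V3 → V3) (x : V3) : ℝ := (-(u x 0) * x 1 + u x 1 * x 0) / rho x

/-- axisymmetry on a set: the spherical components are independent of the meridian angle -/
def AxisymOn (u : V3 → V3) (Ω : Set V3) : Prop :=
  ∀ x ∈ Ω, ∀ y ∈ Ω, ‖x‖ = ‖y‖ → x 2 = y 2 →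
    uRc u x = uRc u y ∧ uTc u x = uTc u y ∧ uPc u x = uPc u y

/-- spherical frame vector `e_r` -/
def eRv (x : V3) : V3 := ‖x‖⁻¹ • x

/-- spherical frame vector `e_θ` -/
def eThv (x : V3) : V3 := (EuclideanSpace.equiv (Fin 3) ℝ).symm
  ![x 2 * x 0 / (‖x‖ * rho x), x 2 * x 1 / (‖x‖ * rho x), -(rho x) / ‖x‖]

/-- spherical frame vector `e_φ` -/
def ePhv (x : V3) : V3 := (EuclideanSpace.equiv (Fin 3) ℝ).symm ![-(x 1) / rho x, x 0 / rho x, 0]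

/-- the spherical cap `S² ∩ B_δ(S) \ {S}` -/
def NSCap (δ : ℝ) : Set V3 := (sphere2 ∩ Metric.ball S3 δ) \ {S3}

/-- the spherical cap `S² ∩ B_δ(S)` -/
def NSCapFull (δ : ℝ) : Set V3 := sphere2 ∩ Metric.ball S3 δ

/-- `L(θ) = ln(cot(θ/2)) + α`, written in Cartesian variables. -/
def Lfun (α : ℝ) (x : V3) : ℝ := Real.log ((‖x‖ + x 2) / rho x) + α

/-- `D(θ) = cos θ + sin²θ · L(θ)`, written in Cartesian variables. -/
def Dfun (α : ℝ) (x : V3) : ℝ := x 2 / ‖x‖ + (rho x / ‖x‖) ^ 2 * Lfun α x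

/-- the explicit velocity field of Example 3.1 (case `c₃ = -4`). -/
def u16 (α : ℝ) (x : V3) : V3 :=
  ‖x‖⁻¹ • ((4 * (rho x / ‖x‖) * (1 - (x 2 / ‖x‖) * Lfun α x) / Dfun α x) • eThv x
    + (-4 - 8 * (1 - (x 2 / ‖x‖) * Lfun α x) / (Dfun α x) ^ 2) • eRv x)

/-- the explicit pressure of Example 3.1 (case `c₃ = -4`). -/
def p16 (α : ℝ) (x : V3) : ℝ :=
  (8 * (-2 + (x 2 / ‖x‖) * Lfun α x - (rho x / ‖x‖) ^ 2 * (Lfun α x) ^ 2)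
    / (Dfun α x) ^ 2) / ‖x‖ ^ 2


inductive EE : Type where
  | z : EE
  | r : EE
  | s : EE
  | l : EE
  | a : EE
  | k : EE
  | c : ℝ → EE
  | add : EE → EE → EE
  | mul : EE → EE → EE

namespace EE

/-- derivative divided by the horizontal coordinate -/
def da : EE → EE
  | z => c 0
  | r => s
  | s => mul (c (-1)) (mul s (mul s s))
  | l => mul (c (-1)) (mul z (mul s k))
  | a => mul (c (-2)) (mul l (mul a a))
  | k => mul (c (-2)) (mul k k)
  | c _ => c 0
  | add e f => add (da e) (da f)
  | mul e f => add (mul (da e) f) (mul e (da f))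

/-- vertical derivative -/
def db : EE → EE
  | z => c 1
  | r => mul z s
  | s => mul (c (-1)) (mul z (mul s (mul s s)))
  | l => s
  | a => mul (c (-2)) (mul r (mul a a))
  | k => c 0
  | c _ => c 0
  | add e f => add (db e) (db f)
  | mul e f => add (mul (db e) f) (mul e (db f))

def evv (vz vr vs vl va vk : ℝ) : EE → ℝ
  | z => vz
  | r => vr
  | s => vs
  | l => vl
  | a => va
  | k => vk
  | c t => t
  | add e f => evv vz vr vs vl va vk e + evv vz vr vs vl va vk f
  | mul e f => evv vz vr vs vl va vk e * evv vz vr vs vl va vk f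

end EE

def qf (x : V3) : ℝ := x 0 ^ 2 + x 1 ^ 2
def Mf (α : ℝ) (x : V3) : ℝ := ‖x‖ * x 2 + qf x * Lfun α x

def ev (α : ℝ) (e : EE) (x : V3) : ℝ :=
  e.evv (x 2) ‖x‖ (‖x‖)⁻¹ (Lfun α x) (Mf α x)⁻¹ (qf x)⁻¹

def lin (a b c : ℝ) : V3 →L[ℝ] ℝ :=
  a • EuclideanSpace.proj 0 + b • EuclideanSpace.proj 1 + c • EuclideanSpace.proj 2

lemma lin_apply (a b c : ℝ) (v : V3) : lin a b c v = a * v 0 + b * v 1 + c * v 2 := by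
  simp [lin]

def AG (f : V3 → ℝ) (a b : ℝ) (x : V3) : Prop := HasFDerivAt f (lin (x 0 * a) (x 1 * a) b) x

lemma hproj (i : Fin 3) (x : V3) : HasFDerivAt (fun y : V3 => y i)
    (EuclideanSpace.proj i : V3 →L[ℝ] ℝ) x :=
  (EuclideanSpace.proj i : V3 →L[ℝ] ℝ).hasFDerivAt

lemma rho_eq (x : V3) : rho x = √(qf x) := rfl

lemma norm_sq3 (x : V3) : ‖x‖ ^ 2 = qf x + x 2 ^ 2 := by
  rw [EuclideanSpace.norm_sq_eq, Fin.sum_univ_three]; simp [qf]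

lemma qpos {x : V3} (h : rho x ≠ 0) : 0 < qf x := by
  rw [rho_eq] at h
  exact lt_of_not_ge fun h' => h (Real.sqrt_eq_zero_of_nonpos h')

lemma rpos {x : V3} (h : rho x ≠ 0) : 0 < ‖x‖ := by
  have := qpos h
  have h2 := norm_sq3 x
  rcases (norm_nonneg x).eq_or_lt with h3 | h3
  · rw [← h3] at h2; nlinarith [sq_nonneg (x 2)]
  · exact h3

lemma rzpos {x : V3} (h : rho x ≠ 0) : 0 < ‖x‖ + x 2 := by
  have := qpos h
  have h2 := norm_sq3 x
  have h3 := rpos h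
  by_contra h4
  nlinarith

lemma M_eq (α : ℝ) {x : V3} (h : rho x ≠ 0) : Mf α x = ‖x‖ ^ 2 * Dfun α x := by
  have h3 := rpos h
  have : rho x ^ 2 = qf x := Real.sq_sqrt (qpos h).le
  unfold Mf Dfun
  rw [div_pow, this]
  field_simp

lemma AG_q (x : V3) : AG qf 2 0 x := by
  unfold AG
  have := ((hproj 0 x).pow 2).add ((hproj 1 x).pow 2)
  refine this.congr_fderiv ?_
  ext v
  simp [lin_apply]
  ring

lemma AG_z (x : V3) : AG (fun x => x 2) 0 1 x := by
  unfold AG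
  refine (hproj 2 x).congr_fderiv ?_
  ext v
  simp [lin_apply]

lemma AG_r {x : V3} (h : rho x ≠ 0) : AG (fun x => ‖x‖) (‖x‖)⁻¹ (x 2 * ‖x‖⁻¹) x := by
  have h3 := rpos h
  unfold AG
  have h1 := ((AG_q x).add ((hproj 2 x).pow 2)).sqrt (by
    have := norm_sq3 x
    simp only [Pi.add_apply, Pi.pow_apply]
    rw [← this]; positivity)
  have e : ∀ y : V3, √((qf + (fun y : V3 => y 2)^2) y) = ‖y‖ := by
    intro y
    simp only [Pi.add_apply, Pi.pow_apply]
    rw [← norm_sq3, Real.sqrt_sq (norm_nonneg y)]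
  have e2 := e x
  simp only [Pi.add_apply, Pi.pow_apply] at e2
  have e' : (fun y : V3 => ‖y‖) = fun y => √((qf + (fun y : V3 => y 2)^2) y) := by
    funext y; rw [e]
  rw [e']
  refine h1.congr_fderiv ?_
  ext v
  simp [lin_apply, e2]
  field_simp

lemma rho_ev {x : V3} (h : rho x ≠ 0) : ∀ᶠ y in 𝓝 x, rho y ≠ 0 := by
  have : Continuous rho := by unfold rho; fun_prop
  exact this.continuousAt.eventually_ne h

lemma AG_l (α : ℝ) {x : V3} (h : rho x ≠ 0) :
    AG (Lfun α) (-1 * (x 2 * (‖x‖⁻¹ * (qf x)⁻¹))) ‖x‖⁻¹ x := by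
  have h3 := rpos h
  have h4 := rzpos h
  have h5 := qpos h
  have hn := norm_sq3 x
  have e : Lfun α =ᶠ[𝓝 x] fun y => Real.log (‖y‖ + y 2) - 1/2 * Real.log (qf y) + α := by
    filter_upwards [rho_ev h] with y hy
    unfold Lfun
    rw [Real.log_div (rzpos hy).ne' hy, rho_eq, Real.log_sqrt (qpos hy).le]
    ring
  unfold AG
  have r1 := AG_r h
  have q1 := AG_q x
  unfold AG at r1 q1
  refine HasFDerivAt.congr_of_eventuallyEq ?_ e
  refine HasFDerivAt.congr_fderiv ((((r1.add (hproj 2 x)).log h4.ne').sub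
    ((q1.log h5.ne').const_mul (1/2))).add_const α) ?_
  ext v
  have h4' : (fun y : V3 => ‖y‖) x + x 2 ≠ 0 := h4.ne'
  simp [lin_apply]
  field_simp
  have hq : qf x = ‖x‖^2 - x 2 ^2 := by linarith
  rw [hq]
  ring

lemma AG_mul {f g : V3 → ℝ} {a b a' b' : ℝ} {x : V3} (hf : AG f a b x) (hg : AG g a' b' x) :
    AG (fun y => f y * g y) (a * g x + f x * a') (b * g x + f x * b') x := by
  unfold AG at *
  refine (hf.mul hg).congr_fderiv ?_
  ext v
  simp [lin_apply]
  ring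

lemma AG_add {f g : V3 → ℝ} {a b a' b' : ℝ} {x : V3} (hf : AG f a b x) (hg : AG g a' b' x) :
    AG (fun y => f y + g y) (a + a') (b + b') x := by
  unfold AG at *
  refine (hf.add hg).congr_fderiv ?_
  ext v
  simp [lin_apply]
  ring

lemma AG_inv {f : V3 → ℝ} {a b : ℝ} {x : V3} (hf : AG f a b x) (h : f x ≠ 0) :
    AG (fun y => (f y)⁻¹) (- a * ((f x)⁻¹ * (f x)⁻¹)) (- b * ((f x)⁻¹ * (f x)⁻¹)) x := by
  unfold AG at *
  refine ((hasDerivAt_inv h).comp_hasFDerivAt x hf).congr_fderiv ?_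
  ext v
  simp [lin_apply]
  field_simp
  ring

lemma AG_congr {f : V3 → ℝ} {a b a' b' : ℝ} {x : V3} (hf : AG f a b x)
    (h1 : a = a') (h2 : b = b') : AG f a' b' x := by
  subst h1 h2; exact hf

lemma AG_M (α : ℝ) {x : V3} (h : rho x ≠ 0) : AG (Mf α) (2 * Lfun α x) (2 * ‖x‖) x := by
  have h3 := rpos h
  have h5 := qpos h
  have hn := norm_sq3 x
  have := AG_add (AG_mul (AG_r h) (AG_z x)) (AG_mul (AG_q x) (AG_l α h))
  refine AG_congr this ?_ ?_
  · field_simp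
    ring
  · field_simp
    linear_combination -hn

lemma AG_const (t : ℝ) (x : V3) : AG (fun _ => t) 0 0 x := by
  unfold AG
  refine (hasFDerivAt_const t x).congr_fderiv ?_
  ext v
  simp [lin_apply]

lemma AG_ev (α : ℝ) {x : V3} (h : rho x ≠ 0) (hD : Mf α x ≠ 0) (e : EE) :
    AG (ev α e) (ev α e.da x) (ev α e.db x) x := by
  have h3 := rpos h
  have h5 := qpos h
  induction e with
  | z => exact AG_z x
  | r => exact AG_r h
  | s =>
    have := AG_inv (AG_r h) h3.ne'
    refine AG_congr this ?_ ?_ <;> simp only [ev, EE.da, EE.db, EE.evv] <;> ring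
  | l => exact AG_l α h
  | a =>
    have := AG_inv (AG_M α h) hD
    refine AG_congr this ?_ ?_ <;> simp only [ev, EE.da, EE.db, EE.evv] <;> ring
  | k =>
    have := AG_inv (AG_q x) h5.ne'
    refine AG_congr this ?_ ?_ <;> simp only [ev, EE.da, EE.db, EE.evv] <;> ring
  | c t => exact AG_const t x
  | add e f h1 h2 => exact AG_add h1 h2
  | mul e f h1 h2 => exact AG_mul h1 h2

lemma pd_AG {f : V3 → ℝ} {a b : ℝ} {x : V3} (hf : AG f a b x) :
    pd 0 f x = x 0 * a ∧ pd 1 f x = x 1 * a ∧ pd 2 f x = b := by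
  unfold AG at hf
  unfold pd
  rw [hf.fderiv]
  simp [lin_apply, e3]

lemma AG.diff {f : V3 → ℝ} {a b : ℝ} {x : V3} (hf : AG f a b x) : DifferentiableAt ℝ f x :=
  HasFDerivAt.differentiableAt hf

lemma pd_congr {f g : V3 → ℝ} {x : V3} (h : f =ᶠ[𝓝 x] g) (j : Fin 3) : pd j f x = pd j g x := by
  unfold pd; rw [h.fderiv_eq]

lemma cdiff (i : Fin 3) (x : V3) : DifferentiableAt ℝ (fun y : V3 => y i) x :=
  (hproj i x).differentiableAt

lemma pd_coord (i j : Fin 3) (x : V3) : pd j (fun y => y i) x = if i = j then 1 else 0 := by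
  unfold pd; rw [(hproj i x).fderiv]; simp [e3]

lemma pd_mul {f g : V3 → ℝ} {x : V3} (hf : DifferentiableAt ℝ f x) (hg : DifferentiableAt ℝ g x)
    (j : Fin 3) : pd j (fun y => f y * g y) x = pd j f x * g x + f x * pd j g x := by
  unfold pd; rw [fderiv_fun_mul hf hg]; simp; ring

lemma pd_add {f g : V3 → ℝ} {x : V3} (hf : DifferentiableAt ℝ f x) (hg : DifferentiableAt ℝ g x)
    (j : Fin 3) : pd j (fun y => f y + g y) x = pd j f x + pd j g x := by
  unfold pd; rw [fderiv_fun_add hf hg]; simp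

def Good (α : ℝ) (x : V3) : Prop := rho x ≠ 0 ∧ Mf α x ≠ 0

lemma good_ev {α : ℝ} {x : V3} (h : Good α x) : ∀ᶠ y in 𝓝 x, Good α y :=
  (rho_ev h.1).and ((AG_M α h.1).diff.continuousAt.eventually_ne h.2)

lemma pd0 {α : ℝ} {x : V3} (h : Good α x) (e : EE) : pd 0 (ev α e) x = x 0 * ev α e.da x :=
  (pd_AG (AG_ev α h.1 h.2 e)).1
lemma pd1 {α : ℝ} {x : V3} (h : Good α x) (e : EE) : pd 1 (ev α e) x = x 1 * ev α e.da x :=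
  (pd_AG (AG_ev α h.1 h.2 e)).2.1
lemma pd2 {α : ℝ} {x : V3} (h : Good α x) (e : EE) : pd 2 (ev α e) x = ev α e.db x :=
  (pd_AG (AG_ev α h.1 h.2 e)).2.2
lemma evd {α : ℝ} {x : V3} (h : Good α x) (e : EE) : DifferentiableAt ℝ (ev α e) x :=
  (AG_ev α h.1 h.2 e).diff

lemma lap_ev {α : ℝ} {x : V3} (h : Good α x) (e : EE) : lap3 (ev α e) x =
    2 * ev α e.da x + qf x * ev α e.da.da x + ev α e.db.db x := by
  unfold lap3
  rw [Fin.sum_univ_three]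
  have h0 : (fun y => pd 0 (ev α e) y) =ᶠ[𝓝 x] fun y => y 0 * ev α e.da y := by
    filter_upwards [good_ev h] with y hy using pd0 hy e
  have h1 : (fun y => pd 1 (ev α e) y) =ᶠ[𝓝 x] fun y => y 1 * ev α e.da y := by
    filter_upwards [good_ev h] with y hy using pd1 hy e
  have h2 : (fun y => pd 2 (ev α e) y) =ᶠ[𝓝 x] fun y => ev α e.db y := by
    filter_upwards [good_ev h] with y hy using pd2 hy e
  rw [pd_congr h0, pd_congr h1, pd_congr h2, pd_mul (cdiff 0 x) (evd h _),
    pd_mul (cdiff 1 x) (evd h _), pd_coord, pd_coord, pd0 h, pd1 h]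
  have := pd2 h e.db
  change pd 2 (fun y => ev α e.db y) x = _ at this
  rw [this]
  simp [qf]
  ring

lemma lap_mul {α : ℝ} {x : V3} (h : Good α x) (e : EE) (i : Fin 3) :
    lap3 (fun y => y i * ev α e y) x = x i * lap3 (ev α e) x + 2 * pd i (ev α e) x := by
  have key : ∀ j, pd j (fun y => pd j (fun y => y i * ev α e y) y) x =
      x i * pd j (fun y => pd j (ev α e) y) x + 2 * (if i = j then 1 else 0) * pd j (ev α e) x := by
    intro j
    have h0 : (fun y => pd j (fun y => y i * ev α e y) y) =ᶠ[𝓝 x]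
        fun y => (if i = j then 1 else 0) * ev α e y + y i * pd j (ev α e) y := by
      filter_upwards [good_ev h] with y hy
      rw [pd_mul (cdiff i y) (evd hy _), pd_coord]
    have hd : DifferentiableAt ℝ (fun y => pd j (ev α e) y) x := by
      fin_cases j
      · exact ((cdiff 0 x).mul (evd h e.da)).congr_of_eventuallyEq (by
          filter_upwards [good_ev h] with y hy using pd0 hy e)
      · exact ((cdiff 1 x).mul (evd h e.da)).congr_of_eventuallyEq (by
          filter_upwards [good_ev h] with y hy using pd1 hy e)
      · exact (evd h e.db).congr_of_eventuallyEq (by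
          filter_upwards [good_ev h] with y hy using pd2 hy e)
    have hc : DifferentiableAt ℝ (fun _ : V3 => if i = j then (1:ℝ) else 0) x :=
      differentiableAt_const _
    rw [pd_congr h0, pd_add (hc.fun_mul (evd h e)) ((cdiff i x).fun_mul hd), pd_mul hc (evd h e),
      pd_mul (cdiff i x) hd, pd_coord]
    have : pd j (fun _ : V3 => if i = j then (1:ℝ) else 0) x = 0 := by simp [pd]
    rw [this]
    ring
  unfold lap3
  simp_rw [key]
  rw [Finset.sum_add_distrib, Finset.mul_sum]
  simp

namespace EE
def T : EE := add r (mul (c (-1)) (mul z l))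
def F : EE := add (mul (c (-4)) (mul l a)) (mul (c (-8)) (mul r (mul T (mul a a))))
def G : EE := add (mul (c (-4)) (mul r a)) (mul (c (-8)) (mul (mul r z) (mul T (mul a a))))
def P : EE := mul (mul (c 8) (mul a a)) (add (mul (c (-2)) (mul r r)) (add (mul z (mul r l))
  (mul (add (mul z z) (mul (c (-1)) (mul r r))) (mul l l))))
end EE

lemma id0 (z r L q M : ℝ) (hr : r ≠ 0) (hq : q ≠ 0) (hM : M ≠ 0) (e1 : q = r ^ 2 - z ^ 2)
    (e2 : M = r * z + q * L) (E : EE → ℝ) (hE : E = EE.evv z r r⁻¹ L M⁻¹ q⁻¹) :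
    2 * E EE.F + q * E EE.F.da + E EE.G.db = 0 := by
  subst hE
  simp only [EE.F, EE.G, EE.T, EE.da, EE.db, EE.evv]
  rw [e1] at hq e2
  rw [e2] at hM
  rw [e2, e1]
  field_simp
  ring

lemma id1 (z r L q M : ℝ) (hr : r ≠ 0) (hq : q ≠ 0) (hM : M ≠ 0) (e1 : q = r ^ 2 - z ^ 2)
    (e2 : M = r * z + q * L) (E : EE → ℝ) (hE : E = EE.evv z r r⁻¹ L M⁻¹ q⁻¹) :
    -(4 * E EE.F.da + q * E EE.F.da.da + E EE.F.db.db) + E EE.F ^ 2 + q * E EE.F * E EE.F.da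
      + E EE.G * E EE.F.db + E EE.P.da = 0 := by
  subst hE
  simp only [EE.F, EE.G, EE.P, EE.T, EE.da, EE.db, EE.evv]
  rw [e1] at hq e2
  rw [e2] at hM
  rw [e2, e1]
  field_simp
  ring

lemma id2 (z r L q M : ℝ) (hr : r ≠ 0) (hq : q ≠ 0) (hM : M ≠ 0) (e1 : q = r ^ 2 - z ^ 2)
    (e2 : M = r * z + q * L) (E : EE → ℝ) (hE : E = EE.evv z r r⁻¹ L M⁻¹ q⁻¹) :
    -(2 * E EE.G.da + q * E EE.G.da.da + E EE.G.db.db) + q * E EE.F * E EE.G.da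
      + E EE.G * E EE.G.db + E EE.P.db = 0 := by
  subst hE
  simp only [EE.F, EE.G, EE.P, EE.T, EE.da, EE.db, EE.evv]
  rw [e1] at hq e2
  rw [e2] at hM
  rw [e2, e1]
  field_simp
  ring

lemma u16_0 {α : ℝ} {x : V3} (h : Good α x) :
    u16 α x 0 = x 0 * ev α EE.F x ∧ u16 α x 1 = x 1 * ev α EE.F x ∧ u16 α x 2 = ev α EE.G x ∧
    p16 α x = ev α EE.P x := by
  obtain ⟨h1, hM⟩ := h
  have hr := (rpos h1).ne'
  have hD : Dfun α x = Mf α x / ‖x‖ ^ 2 := by rw [M_eq α h1]; field_simp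
  have hq : rho x ^ 2 = ‖x‖ ^ 2 - x 2 ^ 2 := by
    rw [norm_sq3, rho_eq, Real.sq_sqrt (qpos h1).le]; ring
  have e2 : Mf α x = ‖x‖ * x 2 + rho x ^ 2 * Lfun α x := by
    rw [rho_eq, Real.sq_sqrt (qpos h1).le]; rfl
  simp only [p16, u16, eThv, eRv, ev, EE.F, EE.G, EE.P, EE.T, EE.evv, hD]
  generalize Lfun α x = L at *
  generalize Mf α x = M at *
  generalize ‖x‖ = r at *
  generalize rho x = ρ at *
  rw [hq] at e2
  simp
  refine ⟨?_, ?_, ?_, ?_⟩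
  · field_simp
    rw [e2]
    ring
  · field_simp
    rw [e2]
    ring
  · field_simp
    rw [hq, e2]
    ring
  · field_simp
    rw [hq]
    ring

lemma NS_part {α : ℝ} {x : V3} (h : Good α x) : NSEq (u16 α) (p16 α) x := by
  have hg := good_ev h
  have h0 : (fun y => u16 α y 0) =ᶠ[𝓝 x] fun y => y 0 * ev α EE.F y := by
    filter_upwards [hg] with y hy using (u16_0 hy).1
  have h1 : (fun y => u16 α y 1) =ᶠ[𝓝 x] fun y => y 1 * ev α EE.F y := by
    filter_upwards [hg] with y hy using (u16_0 hy).2.1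
  have h2 : (fun y => u16 α y 2) =ᶠ[𝓝 x] ev α EE.G := by
    filter_upwards [hg] with y hy using (u16_0 hy).2.2.1
  have hp : p16 α =ᶠ[𝓝 x] ev α EE.P := by
    filter_upwards [hg] with y hy using (u16_0 hy).2.2.2
  have lapc : ∀ {f g : V3 → ℝ}, f =ᶠ[𝓝 x] g → lap3 f x = lap3 g x := by
    intro f g hfg
    unfold lap3
    refine Finset.sum_congr rfl fun j _ => pd_congr ?_ j
    filter_upwards [hfg.eventuallyEq_nhds] with y hy using pd_congr hy j
  have e1 : qf x = ‖x‖ ^ 2 - x 2 ^ 2 := by rw [norm_sq3]; ring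
  have i0 := id0 (x 2) ‖x‖ (Lfun α x) (qf x) (Mf α x) (rpos h.1).ne' (qpos h.1).ne' h.2 e1 rfl
    (fun e => ev α e x) rfl
  have i1 := id1 (x 2) ‖x‖ (Lfun α x) (qf x) (Mf α x) (rpos h.1).ne' (qpos h.1).ne' h.2 e1 rfl
    (fun e => ev α e x) rfl
  have i2 := id2 (x 2) ‖x‖ (Lfun α x) (qf x) (Mf α x) (rpos h.1).ne' (qpos h.1).ne' h.2 e1 rfl
    (fun e => ev α e x) rfl
  have hq : qf x = x 0 ^ 2 + x 1 ^ 2 := rfl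
  refine ⟨fun i => ?_, ?_⟩
  · rw [Fin.sum_univ_three, (u16_0 h).1, (u16_0 h).2.1, (u16_0 h).2.2.1, pd_congr hp]
    fin_cases i
    · simp only [Fin.zero_eta, Fin.mk_one, Fin.reduceFinMk]
      rw [lapc h0, pd_congr h0, pd_congr h0, pd_congr h0, lap_mul h, lap_ev h,
        pd_mul (cdiff _ _) (evd h _), pd_mul (cdiff _ _) (evd h _), pd_mul (cdiff _ _) (evd h _),
        pd_coord, pd_coord, pd_coord, pd0 h, pd1 h, pd2 h, pd0 h]
      simp only [if_true, Fin.reduceEq, if_false]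
      linear_combination (x 0) * i1 - x 0 * ev α EE.F x * ev α EE.F.da x * hq
    · simp only [Fin.zero_eta, Fin.mk_one, Fin.reduceFinMk]
      rw [lapc h1, pd_congr h1, pd_congr h1, pd_congr h1, lap_mul h, lap_ev h,
        pd_mul (cdiff _ _) (evd h _), pd_mul (cdiff _ _) (evd h _), pd_mul (cdiff _ _) (evd h _),
        pd_coord, pd_coord, pd_coord, pd0 h, pd1 h, pd2 h, pd1 h]
      simp only [if_true, Fin.reduceEq, if_false]
      linear_combination (x 1) * i1 - x 1 * ev α EE.F x * ev α EE.F.da x * hq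
    · simp only [Fin.zero_eta, Fin.mk_one, Fin.reduceFinMk]
      rw [lapc h2, pd_congr h2, pd_congr h2, pd_congr h2, lap_ev h, pd0 h, pd1 h, pd2 h, pd2 h]
      linear_combination i2 - ev α EE.F x * ev α EE.G.da x * hq
  · rw [Fin.sum_univ_three, pd_congr h0, pd_congr h1, pd_congr h2,
      pd_mul (cdiff _ _) (evd h _), pd_mul (cdiff _ _) (evd h _), pd_coord, pd_coord,
      pd0 h, pd1 h, pd2 h]
    simp only [if_true]
    linear_combination i0 - ev α EE.F.da x * hq

lemma norm_u16 (α : ℝ) {x : V3} (h : rho x ≠ 0) (hx : ‖x‖ = 1) :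
    ‖u16 α x‖ ^ 2 = 16 * rho x ^ 2 * (1 - x 2 * Lfun α x) ^ 2 / Dfun α x ^ 2
      + (-4 - 8 * (1 - x 2 * Lfun α x) / Dfun α x ^ 2) ^ 2 := by
  have hq : x 0 ^ 2 = rho x ^ 2 - x 1 ^ 2 := by
    rw [rho_eq, Real.sq_sqrt (qpos h).le]; unfold qf; ring
  have hn := norm_sq3 x
  rw [hx, ← Real.sq_sqrt (qpos h).le, ← rho_eq] at hn
  have hr : rho x ^ 2 = 1 - x 2 ^ 2 := by linarith
  rw [EuclideanSpace.norm_sq_eq, Fin.sum_univ_three]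
  simp only [u16, eThv, eRv, hx]
  simp
  generalize -4 - 8 * (1 - x 2 * Lfun α x) / Dfun α x ^ 2 = B
  have : 16 * rho x ^ 2 * (1 - x 2 * Lfun α x) ^ 2 / Dfun α x ^ 2
      = (4 * rho x * (1 - x 2 * Lfun α x) / Dfun α x) ^ 2 := by ring
  rw [this]
  generalize 4 * rho x * (1 - x 2 * Lfun α x) / Dfun α x = A
  have : (A * (x 2 * x 0 / rho x) + B * x 0) ^ 2 + (A * (x 2 * x 1 / rho x) + B * x 1) ^ 2
      = (A * (x 2 / rho x) + B) ^ 2 * rho x ^ 2 := by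
    rw [← sub_eq_zero]
    linear_combination (A * (x 2 / rho x) + B) ^ 2 * hq
  rw [this]
  field_simp
  rw [← sub_eq_zero]
  linear_combination (A ^ 2 + B ^ 2) * hr

lemma lim_d (α : ℝ) (z L q D : ℝ → ℝ) (hz : z = fun d => d ^ 2 / 2 - 1)
    (hL : L = fun d => Real.log d - Real.log √(4 - d ^ 2) + α)
    (hq : q = fun d => d ^ 2 * (4 - d ^ 2) / 4) (hD : D = fun d => z d + q d * L d) :
    Tendsto (fun d => √(16 * q d * (1 - z d * L d) ^ 2 / D d ^ 2
      + (-4 - 8 * (1 - z d * L d) / D d ^ 2) ^ 2) / Real.log d) (𝓝[>] 0) (𝓝 (-8)) := by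
  have tl : Tendsto Real.log (𝓝[>] 0) atBot := Real.tendsto_log_nhdsGT_zero
  have ti : Tendsto (fun d => (Real.log d)⁻¹) (𝓝[>] 0) (𝓝 0) := tl.inv_tendsto_atBot
  have neg : ∀ᶠ d in 𝓝[>] (0:ℝ), Real.log d < 0 := tl.eventually_lt_atBot 0
  have tz : Tendsto z (𝓝[>] 0) (𝓝 (-1)) := by
    have : ContinuousAt z 0 := by rw [hz]; fun_prop
    have := this.tendsto.mono_left (nhdsWithin_le_nhds (s := Set.Ioi 0))
    simpa [hz] using this
  have tq : Tendsto q (𝓝[>] 0) (𝓝 0) := by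
    have : ContinuousAt q 0 := by rw [hq]; fun_prop
    have := this.tendsto.mono_left (nhdsWithin_le_nhds (s := Set.Ioi 0))
    simpa [hq] using this
  obtain ⟨c, tc⟩ : ∃ c, Tendsto (fun d => - Real.log √(4 - d ^ 2) + α) (𝓝[>] 0) (𝓝 c) := by
    have : ContinuousAt (fun d : ℝ => - Real.log √(4 - d ^ 2) + α) 0 := by
      have h1 : ContinuousAt (fun d : ℝ => √(4 - d ^ 2)) 0 := by fun_prop
      exact ((h1.log (by simp)).neg).add_const α
    exact ⟨_, this.tendsto.mono_left (nhdsWithin_le_nhds (s := Set.Ioi 0))⟩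
  have tLl : Tendsto (fun d => L d * (Real.log d)⁻¹) (𝓝[>] 0) (𝓝 1) := by
    have : Tendsto (fun d => 1 + (- Real.log √(4 - d ^ 2) + α) * (Real.log d)⁻¹) (𝓝[>] 0)
      (𝓝 (1 + c * 0)) := tendsto_const_nhds.add (tc.mul ti)
    rw [mul_zero, add_zero] at this
    refine this.congr' ?_
    filter_upwards [neg] with d hd
    have hne := hd.ne
    rw [hL]
    field_simp
    ring
  have tqL : Tendsto (fun d => q d * L d) (𝓝[>] 0) (𝓝 0) := by
    have h1 : Tendsto (fun d => Real.log d * d) (𝓝[>] 0) (𝓝 0) := by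
      simpa using tendsto_log_mul_rpow_nhdsGT_zero (r := 1) one_pos
    have h2 : Tendsto (fun d : ℝ => d * (4 - d ^ 2) / 4) (𝓝[>] 0) (𝓝 0) := by
      have : ContinuousAt (fun d : ℝ => d * (4 - d ^ 2) / 4) 0 := by fun_prop
      have := this.tendsto.mono_left (nhdsWithin_le_nhds (s := Set.Ioi 0))
      simpa using this
    have := (h1.mul h2).mul tLl
    rw [mul_zero, zero_mul] at this
    refine this.congr' ?_
    filter_upwards [neg] with d hd
    have := hd.ne
    rw [hq]
    field_simp
  have tD : Tendsto D (𝓝[>] 0) (𝓝 (-1)) := by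
    rw [hD]; simpa using tz.add tqL
  have tW : Tendsto (fun d => (1 - z d * L d) * (Real.log d)⁻¹) (𝓝[>] 0) (𝓝 1) := by
    have := ti.sub (tz.mul tLl)
    simp only [mul_one, sub_neg_eq_add, zero_add] at this
    refine this.congr fun d => ?_
    ring
  have tD2 : Tendsto (fun d => (D d ^ 2)⁻¹) (𝓝[>] 0) (𝓝 1) := by
    simpa using (tD.pow 2).inv₀ (by norm_num)
  have t1 : Tendsto (fun d => 16 * q d * ((1 - z d * L d) * (Real.log d)⁻¹) ^ 2 * (D d ^ 2)⁻¹
      + (-4 * (Real.log d)⁻¹ - 8 * ((1 - z d * L d) * (Real.log d)⁻¹) * (D d ^ 2)⁻¹) ^ 2)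
      (𝓝[>] 0) (𝓝 (16 * 0 * 1 ^ 2 * 1 + (-4 * 0 - 8 * 1 * 1) ^ 2)) :=
    (((tq.const_mul 16).mul (tW.pow 2)).mul tD2).add
      (((ti.const_mul (-4)).sub ((tW.const_mul 8).mul tD2)).pow 2)
  have t2 := (t1.sqrt).neg
  have : -√(16 * 0 * 1 ^ 2 * 1 + (-4 * 0 - 8 * 1 * 1) ^ 2 : ℝ) = -8 := by
    rw [show (16 * 0 * 1 ^ 2 * 1 + (-4 * 0 - 8 * 1 * 1) ^ 2 : ℝ) = 8 ^ 2 by norm_num,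
      Real.sqrt_sq (by norm_num)]
  rw [this] at t2
  refine t2.congr' ?_
  filter_upwards [neg] with d hd
  have e : 16 * q d * ((1 - z d * L d) * (Real.log d)⁻¹) ^ 2 * (D d ^ 2)⁻¹
      + (-4 * (Real.log d)⁻¹ - 8 * ((1 - z d * L d) * (Real.log d)⁻¹) * (D d ^ 2)⁻¹) ^ 2
      = (16 * q d * (1 - z d * L d) ^ 2 / D d ^ 2
      + (-4 - 8 * (1 - z d * L d) / D d ^ 2) ^ 2) / (Real.log d) ^ 2 := by
    ring
  rw [e, Real.sqrt_div' _ (sq_nonneg _), Real.sqrt_sq_eq_abs, abs_of_neg hd, div_neg, neg_neg]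

lemma lim_part (α : ℝ) : Tendsto (fun x => ‖u16 α x‖ / Real.log (dist x S3))
      (𝓝[sphere2 \ {S3}] S3) (𝓝 (-8)) := by
  have td : Tendsto (fun x : V3 => dist x S3) (𝓝[sphere2 \ {S3}] S3) (𝓝[>] 0) := by
    refine tendsto_nhdsWithin_iff.2 ⟨?_, ?_⟩
    · have : ContinuousAt (fun x : V3 => dist x S3) S3 := by fun_prop
      have := this.tendsto.mono_left (nhdsWithin_le_nhds (s := sphere2 \ {S3}))
      simpa using this
    · filter_upwards [self_mem_nhdsWithin] with x hx
      exact dist_pos.2 hx.2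
  have lt1 : ∀ᶠ d in 𝓝[>] (0:ℝ), d < 1 :=
    nhdsWithin_le_nhds (Iio_mem_nhds one_pos)
  have := (lim_d α _ _ _ _ rfl rfl rfl rfl).comp td
  refine this.congr' ?_
  filter_upwards [self_mem_nhdsWithin, td.eventually lt1] with x hx hd1
  have hd0 : 0 < dist x S3 := dist_pos.2 hx.2
  have hx1 : ‖x‖ = 1 := by simpa [sphere2] using hx.1
  have hn := norm_sq3 x
  have hd : dist x S3 ^ 2 = qf x + (x 2 + 1) ^ 2 := by
    rw [EuclideanSpace.dist_eq, Real.sq_sqrt (by positivity), Fin.sum_univ_three]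
    simp [S3, qf, Real.dist_eq]
  rw [hx1] at hn
  generalize hdd : dist x S3 = d at *
  have hz : x 2 = d ^ 2 / 2 - 1 := by linarith
  have hq : qf x = d ^ 2 * (4 - d ^ 2) / 4 := by
    have : qf x = 1 - x 2 ^ 2 := by linarith
    rw [this, hz]; ring
  have h4 : 0 < 4 - d ^ 2 := by nlinarith
  have hs : 0 < √(4 - d ^ 2) := Real.sqrt_pos.2 h4
  have hrho : rho x = d * √(4 - d ^ 2) / 2 := by
    rw [rho_eq, hq, show d ^ 2 * (4 - d ^ 2) / 4 = (d * √(4 - d ^ 2) / 2) ^ 2 by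
      rw [div_pow, mul_pow, Real.sq_sqrt h4.le]; norm_num, Real.sqrt_sq (by positivity)]
  have hr0 : rho x ≠ 0 := by rw [hrho]; positivity
  have hr2 : rho x ^ 2 = d ^ 2 * (4 - d ^ 2) / 4 := by
    rw [rho_eq, Real.sq_sqrt (qpos hr0).le, hq]
  have hL : Lfun α x = Real.log d - Real.log √(4 - d ^ 2) + α := by
    unfold Lfun
    rw [← Real.log_div hd0.ne' hs.ne', hx1, hz, hrho]
    congr 2
    field_simp
    ring
  have hD : Dfun α x = (d ^ 2 / 2 - 1) + d ^ 2 * (4 - d ^ 2) / 4 *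
      (Real.log d - Real.log √(4 - d ^ 2) + α) := by
    unfold Dfun
    rw [hx1, div_one, div_one, hr2, hL, hz]
  have hu := norm_u16 α hr0 hx1
  rw [hr2, hD, hL, hz] at hu
  simp only [Function.comp, hdd]
  rw [← hu, Real.sqrt_sq (norm_nonneg _)]

/-- the explicit pair `(u16, p16)` solves Navier–Stokes wherever
`θ ∈ (0,π)` and `D(θ) ≠ 0`, and has logarithmic rate `-8` at the south pole. -/
theorem explicit_log_solution (α : ℝ) :
    (∀ x : V3, rho x ≠ 0 → Dfun α x ≠ 0 → NSEq (u16 α) (p16 α) x) ∧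
    Tendsto (fun x => ‖u16 α x‖ / Real.log (dist x S3))
      (𝓝[sphere2 \ {S3}] S3) (𝓝 (-8)) := by
  refine ⟨fun x h hD => NS_part ⟨h, ?_⟩, lim_part α⟩
  rw [M_eq α h]
  exact mul_ne_zero (pow_ne_zero 2 (rpos h).ne') hD
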